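/- Let u be a C¹ function on an open set Ω ⊆ ℝⁿ such that Δv = u holds weakly for some C¹ function v on Ω (i.e. ∫ v·Δh = ∫ u·h for all h ∈ C_c^∞(Ω)). If u is smooth, then v is smooth. -/

import Mathlib

open MeasureTheory

/-- The Euclidean Laplacian `Δf = ∑ᵢ ∂²f/∂xᵢ²` on `ℝⁿ`. -/
noncomputable def eLap {n : ℕ} (f : EuclideanSpace ℝ (Fin n) → ℝ)
    (x : EuclideanSpace ℝ (Fin n)) : ℝ :=
  ∑ i : Fin n, iteratedFDeriv ℝ 2 f x ![EuclideanSpace.single i 1, EuclideanSpace.single i 1]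

/-!
Let `η` be the radial bump `exp (-1 / (1 - ‖y‖²))`. Its gradient is `-φ y • y` for a radial
function `φ ≥ 0`, so `Δ η` is minus the divergence of `φ y • y`. That divergence is also what
appears, up to the factor `-1 / s`, when the dilation of `φ` to scale `s` is differentiated in `s`.
Testing `Δ v = u` against the dilations of `η` therefore shows that the average of `v` against `φ`
at scale `s` changes at the rate `s` times the average of `u` against `η` at scale `s`. Integrating
over `0 < s ≤ δ` expresses `(∫ φ) • v` as a smooth mollification of `v` minus the convolution of
`u` with a finite measure, which is as regular as `u` is when `u` has compact support. Since the
identity at a point involves only a ball around it, a cutoff reduces the general case to this one.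
-/

open Filter Function InnerProductSpace Metric Module Set Topology
open scoped ContDiff Convolution Laplacian Pointwise

variable {E F : Type*} [NormedAddCommGroup E] [NormedAddCommGroup F] [NormedSpace ℝ F]

section Cutoff

variable [NormedSpace ℝ E]

theorem contDiff_smul_of_tsupport_subset {n : WithTop ℕ∞} {χ : E → ℝ} {f : E → F}
    (hχ : ContDiff ℝ n χ) {Ω : Set E} (hΩ : IsOpen Ω) (hχΩ : tsupport χ ⊆ Ω)
    (hf : ContDiffOn ℝ n f Ω) : ContDiff ℝ n fun x ↦ χ x • f x := by
  refine contDiff_iff_contDiffAt.2 fun x ↦ ?_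
  by_cases hx : x ∈ tsupport χ
  · exact hχ.contDiffAt.smul (hf.contDiffAt (hΩ.mem_nhds (hχΩ hx)))
  · refine contDiffAt_const (c := 0) |>.congr_of_eventuallyEq ?_
    filter_upwards [notMem_tsupport_iff_eventuallyEq.1 hx] with y hy
    rw [hy, Pi.zero_apply, zero_smul]

end Cutoff

section ConvolutionWithParam

variable {E₁ E₂ : Type*} [NormedAddCommGroup E₁] [NormedSpace ℝ E₁] [NormedAddCommGroup E₂]
  [NormedSpace ℝ E₂] [NormedSpace ℝ E] [MeasurableSpace E] [BorelSpace E] {μ : Measure E}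

theorem hasDerivAt_convolution_right_with_param (L : E₁ →L[ℝ] E₂ →L[ℝ] F) {f : E → E₁}
    {g : ℝ → E → E₂} {I : Set ℝ} {K : Set E} (hI : IsOpen I) (hK : IsCompact K)
    (hgK : ∀ r z, r ∈ I → z ∉ K → g r z = 0) (hf : LocallyIntegrable f μ)
    (hg : ContDiffOn ℝ 1 ↿g (I ×ˢ univ)) {g' : E → E₂} {s : ℝ} (hs : s ∈ I)
    (hg' : ∀ z, HasDerivAt (fun r ↦ g r z) (g' z) s) (x : E) :
    HasDerivAt (fun r ↦ (f ⋆[L, μ] g r) x) ((f ⋆[L, μ] g') x) s := by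
  have hI_nhds (z : E) : I ×ˢ univ ∈ 𝓝 (s, z) := prod_mem_nhds (hI.mem_nhds hs) univ_mem
  have line (z : E) : HasDerivAt (fun r : ℝ ↦ (r, z)) (1, 0) s :=
    (hasDerivAt_id s).prodMk (hasDerivAt_const s z)
  have partial_deriv (z : E) : fderiv ℝ ↿g (s, z) (1, 0) = g' z := by
    have diff := (hg.differentiableOn one_ne_zero).differentiableAt (hI_nhds z)
    have slice := diff.hasFDerivAt.comp_hasDerivAt s (line z)
    exact HasDerivAt.unique (f := fun r ↦ g r z) slice (hg' z)
  have cont : Continuous fun z ↦ fderiv ℝ ↿g (s, z) :=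
    (hg.continuousOn_fderiv_of_isOpen (hI.prod isOpen_univ) le_rfl).comp_continuous
      (.prodMk_right s) fun z ↦ ⟨hs, mem_univ z⟩
  have supp : HasCompactSupport fun z ↦ fderiv ℝ ↿g (s, z) := by
    refine .intro hK fun z hz ↦ ?_
    have : ↿g =ᶠ[𝓝 (s, z)] 0 := by
      filter_upwards [prod_mem_nhds (hI.mem_nhds hs) (hK.isClosed.isOpen_compl.mem_nhds hz)]
        with p hp using hgK p.1 p.2 hp.1 hp.2
    rw [this.fderiv_eq, fderiv_zero, Pi.zero_apply]
  have total :=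
    (hasFDerivAt_convolution_right_with_param L hI hK hgK hf hg (s, x) hs).comp_hasDerivAt s
      (line x)
  simp only [convolution_precompR_apply L hf supp cont, partial_deriv] at total
  exact total

end ConvolutionWithParam

section RadialDiv

variable [NormedSpace ℝ E]

/-- `radialDiv p` is the divergence of the radial vector field `y ↦ p y • y`. -/
noncomputable def radialDiv (p : E → ℝ) (y : E) : ℝ :=
  finrank ℝ E * p y + fderiv ℝ p y y

end RadialDiv

section Laplacian

theorem eLap_eq_laplacian {n : ℕ} (f : EuclideanSpace ℝ (Fin n) → ℝ) : eLap f = Δ f := by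
  ext x
  simp [eLap,
    laplacian_eq_iteratedFDeriv_orthonormalBasis f (EuclideanSpace.basisFun (Fin n) ℝ)]

variable [InnerProductSpace ℝ E] [FiniteDimensional ℝ E]

theorem laplacian_eq_zero_of_notMem_tsupport {f : E → F} {x : E} (hx : x ∉ tsupport f) :
    Δ f x = 0 := by
  rw [(laplacian_congr_nhds (notMem_tsupport_iff_eventuallyEq.1 hx)).eq_of_nhds]
  simp [laplacian_eq_iteratedFDeriv_stdOrthonormalBasis]

theorem laplacian_comp_sub_right (f : E → F) (a : E) :
    Δ (fun x ↦ f (x - a)) = fun x ↦ Δ f (x - a) := by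
  simp [laplacian_eq_iteratedFDeriv_stdOrthonormalBasis, iteratedFDeriv_comp_sub]

theorem laplacian_comp_smul {f : E → F} (hf : ContDiff ℝ 2 f) (c : ℝ) :
    Δ (fun x ↦ f (c • x)) = fun x ↦ c ^ 2 • Δ f (c • x) := by
  simp [laplacian_eq_iteratedFDeriv_stdOrthonormalBasis, Finset.smul_sum,
    iteratedFDeriv_comp_const_smul c (show ContDiff ℝ (2 : ℕ) f from hf)]

theorem laplacian_comp_const_sub {f : E → F} (hf : ContDiff ℝ 2 f) (a : E) :
    Δ (fun x ↦ f (a - x)) = fun x ↦ Δ f (a - x) := by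
  have key : Δ (fun x ↦ f ((-1 : ℝ) • (x - a))) =
      fun x ↦ (-1 : ℝ) ^ 2 • Δ f ((-1 : ℝ) • (x - a)) := by
    rw [laplacian_comp_sub_right (fun x ↦ f ((-1 : ℝ) • x)), laplacian_comp_smul hf]
  simpa using key

theorem laplacian_eq_radialDiv {f p : E → ℝ} (hp : Differentiable ℝ p)
    (hf : ∀ y, HasFDerivAt f (p y • innerSL ℝ y) y) : Δ f = radialDiv p := by
  let b := stdOrthonormalBasis ℝ E
  have hf' : fderiv ℝ f = fun y ↦ p y • innerSL ℝ y := funext fun y ↦ (hf y).fderiv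
  have second_deriv (y w : E) :
      iteratedFDeriv ℝ 2 f y ![w, w] = p y * inner ℝ w w + fderiv ℝ p y w * inner ℝ y w := by
    have h : HasFDerivAt (fun y ↦ p y • innerSL ℝ y) _ y :=
      (hp y).hasFDerivAt.smul (innerSL ℝ (E := E)).hasFDerivAt
    rw [iteratedFDeriv_two_apply, hf', h.fderiv]
    rfl
  ext y
  have expand : fderiv ℝ p y y = ∑ i, fderiv ℝ p y (b i) * inner ℝ y (b i) := by
    conv_lhs => arg 2; rw [← b.sum_repr' y]
    simp [real_inner_comm, mul_comm]
  simp_rw [laplacian_eq_iteratedFDeriv_stdOrthonormalBasis, second_deriv, radialDiv, expand,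
    Finset.sum_add_distrib]
  simp [b]

end Laplacian

section RadialBump

theorem deriv_expNegInvGlue (t : ℝ) :
    deriv expNegInvGlue t = t⁻¹ ^ 2 * expNegInvGlue t := by
  simpa using (expNegInvGlue.hasDerivAt_polynomial_eval_inv_mul 1 t).deriv

/-- The standard smooth bump `y ↦ exp (-1 / (1 - ‖y‖²))` on the open unit ball. -/
noncomputable def radialBump (y : E) : ℝ :=
  expNegInvGlue (1 - ‖y‖ ^ 2)

/-- The nonnegative radial function `φ` such that `∇ radialBump y = -φ y • y`. -/
noncomputable def radialBumpSlope (y : E) : ℝ :=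
  2 * deriv expNegInvGlue (1 - ‖y‖ ^ 2)

theorem radialBump_nonneg (y : E) : 0 ≤ radialBump y :=
  expNegInvGlue.nonneg _

theorem radialBumpSlope_nonneg (y : E) : 0 ≤ radialBumpSlope y := by
  have := expNegInvGlue.nonneg (1 - ‖y‖ ^ 2)
  rw [radialBumpSlope, deriv_expNegInvGlue]
  positivity

theorem radialBump_eq_zero {y : E} (hy : y ∉ closedBall 0 1) : radialBump y = 0 := by
  rw [mem_closedBall_zero_iff, not_le] at hy
  exact expNegInvGlue.zero_of_nonpos (by nlinarith)

theorem radialBumpSlope_eq_zero {y : E} (hy : y ∉ closedBall 0 1) : radialBumpSlope y = 0 := by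
  have : expNegInvGlue (1 - ‖y‖ ^ 2) = 0 := radialBump_eq_zero hy
  rw [radialBumpSlope, deriv_expNegInvGlue, this, mul_zero, mul_zero]

variable [InnerProductSpace ℝ E]

theorem contDiff_radialBump : ContDiff ℝ ∞ (radialBump : E → ℝ) :=
  expNegInvGlue.contDiff.comp (contDiff_const.sub (contDiff_norm_sq ℝ))

theorem contDiff_radialBumpSlope : ContDiff ℝ ∞ (radialBumpSlope : E → ℝ) :=
  contDiff_const.mul <| (contDiff_infty_iff_deriv.1 expNegInvGlue.contDiff).2.comp
    (contDiff_const.sub (contDiff_norm_sq ℝ))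

theorem hasFDerivAt_radialBump (y : E) :
    HasFDerivAt radialBump (-radialBumpSlope y • innerSL ℝ y) y := by
  have glue := (expNegInvGlue.contDiff (n := 1)).differentiable one_ne_zero (1 - ‖y‖ ^ 2)
  have norm_sq := (hasStrictFDerivAt_norm_sq y).hasFDerivAt.const_sub 1
  refine (glue.hasDerivAt.comp_hasFDerivAt y norm_sq).congr_fderiv ?_
  ext w
  simp only [smul_neg, neg_apply, smul_apply, coe_innerSL_apply, nsmul_eq_mul, Nat.cast_ofNat,
    smul_eq_mul, radialBumpSlope, neg_smul, neg_inj]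
  ring

variable [FiniteDimensional ℝ E]

theorem hasCompactSupport_radialBump : HasCompactSupport (radialBump : E → ℝ) :=
  .intro (isCompact_closedBall 0 1) fun _ ↦ radialBump_eq_zero

theorem hasCompactSupport_radialBumpSlope : HasCompactSupport (radialBumpSlope : E → ℝ) :=
  .intro (isCompact_closedBall 0 1) fun _ ↦ radialBumpSlope_eq_zero

theorem integral_radialBumpSlope_pos [MeasurableSpace E] [BorelSpace E] :
    0 < ∫ y : E, radialBumpSlope y := by
  refine contDiff_radialBumpSlope.continuous.integral_pos_of_hasCompactSupport_nonneg_nonzero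
    (x := 0) hasCompactSupport_radialBumpSlope radialBumpSlope_nonneg ?_
  simp [radialBumpSlope, deriv_expNegInvGlue]

theorem laplacian_radialBump : Δ (radialBump : E → ℝ) = -radialDiv radialBumpSlope := by
  have slope_diff := contDiff_radialBumpSlope (E := E).differentiable (by simp)
  rw [laplacian_eq_radialDiv slope_diff.neg hasFDerivAt_radialBump]
  ext y
  simp only [radialDiv, Pi.neg_apply, mul_neg, fderiv_neg, neg_apply, neg_add_rev]
  ring

end RadialBump

section Dilation

variable [NormedSpace ℝ E]

/-- The dilation `z ↦ s⁻ⁿ f (z / s)` of a kernel `f` on an `n`-dimensional space, normalised so as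
to preserve integrals. -/
noncomputable def dilate (f : E → ℝ) (s : ℝ) (z : E) : ℝ :=
  s⁻¹ ^ finrank ℝ E * f (s⁻¹ • z)

theorem dilate_eq_zero_of_notMem_smul_tsupport {f : E → ℝ} {s : ℝ} (hs : s ≠ 0) {I : Set ℝ}
    (hsI : s ∈ I) {z : E} (hz : z ∉ I • tsupport f) : dilate f s z = 0 := by
  have : s⁻¹ • z ∉ tsupport f := fun h ↦ hz ⟨s, hsI, s⁻¹ • z, h, smul_inv_smul₀ hs z⟩
  rw [dilate, image_eq_zero_of_notMem_tsupport this, mul_zero]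

theorem hasCompactSupport_dilate {f : E → ℝ} (hf : HasCompactSupport f) {s : ℝ} (hs : s ≠ 0) :
    HasCompactSupport (dilate f s) :=
  (hf.comp_smul (inv_ne_zero hs)).mul_left

theorem contDiffOn_dilate {n : WithTop ℕ∞} {f : E → ℝ} (hf : ContDiff ℝ n f) :
    ContDiffOn ℝ n ↿(dilate f) ({0}ᶜ ×ˢ univ) := by
  have inv : ContDiffOn ℝ n (fun p : ℝ × E ↦ p.1⁻¹) ({0}ᶜ ×ˢ univ) :=
    contDiffOn_fst.inv fun p hp ↦ hp.1
  exact (inv.pow _).mul (hf.comp_contDiffOn (inv.smul contDiffOn_snd))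

theorem contDiff_dilate {n : WithTop ℕ∞} {f : E → ℝ} (hf : ContDiff ℝ n f) (s : ℝ) :
    ContDiff ℝ n (dilate f s) :=
  contDiff_const.mul (hf.comp (contDiff_const_smul _))

theorem hasDerivAt_dilate {f : E → ℝ} (hf : Differentiable ℝ f) {s : ℝ} (hs : s ≠ 0) (z : E) :
    HasDerivAt (fun s ↦ dilate f s z) (-s⁻¹ * dilate (radialDiv f) s z) s := by
  have line : HasDerivAt (fun r : ℝ ↦ r • z) z s⁻¹ := by
    simpa using (hasDerivAt_id s⁻¹).smul_const z
  have ray := (hf (s⁻¹ • z)).hasFDerivAt.comp_hasDerivAt s⁻¹ line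
  refine (((hasDerivAt_pow (finrank ℝ E) s⁻¹).mul ray).comp s (hasDerivAt_inv hs)).congr_deriv ?_
  simp only [dilate, radialDiv, map_smul, smul_eq_mul, comp_apply]
  rcases finrank ℝ E with - | n
  · simp only [CharP.cast_eq_zero, pow_zero, zero_mul, one_mul, zero_add, mul_neg, neg_mul]
    ring
  · simp only [add_tsub_cancel_right, inv_pow, mul_neg, neg_mul]
    ring

variable [FiniteDimensional ℝ E] [MeasureSpace E] [BorelSpace E]
  [(volume : Measure E).IsAddHaarMeasure]

theorem integral_dilate_smul (f : E → ℝ) (g : E → F) {s : ℝ} (hs : 0 < s) :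
    ∫ z, dilate f s z • g z = ∫ y, f y • g (s • y) := by
  have key := Measure.integral_comp_inv_smul_of_nonneg volume (fun y : E ↦ f y • g (s • y)) hs.le
  simp only [smul_inv_smul₀ hs.ne'] at key
  simp_rw [dilate, mul_smul, integral_smul, key, smul_smul]
  rw [← mul_pow, inv_mul_cancel₀ hs.ne', one_pow, one_smul]

end Dilation

theorem laplacian_dilate [InnerProductSpace ℝ E] [FiniteDimensional ℝ E] {f : E → ℝ}
    (hf : ContDiff ℝ 2 f) (s : ℝ) : Δ (dilate f s) = s⁻¹ ^ 2 • dilate (Δ f) s := by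
  ext z
  have smooth : ContDiff ℝ 2 fun z ↦ f (s⁻¹ • z) := hf.comp (contDiff_const_smul _)
  have key := laplacian_smul (s⁻¹ ^ finrank ℝ E) (smooth.contDiffAt (x := z))
  rw [laplacian_comp_smul hf] at key
  refine key.trans ?_
  simp only [dilate, Pi.smul_apply, smul_eq_mul]
  ring

section ScaledConv

variable [NormedSpace ℝ E] [MeasureSpace E]

/-- The weighted average `∫ y, f y • g (x - s • y)` of `g` at scale `s` around `x`; for `0 < s` it
is the convolution of `g` with `dilate f s`. -/
noncomputable def scaledConv (f : E → ℝ) (g : E → F) (s : ℝ) (x : E) : F :=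
  ∫ y, f y • g (x - s • y)

theorem scaledConv_neg (f : E → ℝ) (g : E → F) : scaledConv (-f) g = -scaledConv f g := by
  ext s x
  simp [scaledConv, integral_neg]

theorem scaledConv_zero [CompleteSpace F] (f : E → ℝ) (g : E → F) (x : E) :
    scaledConv f g 0 x = (∫ y, f y) • g x := by
  simp [scaledConv, integral_smul_const]

variable [FiniteDimensional ℝ E] [BorelSpace E] [(volume : Measure E).IsAddHaarMeasure]

theorem continuous_scaledConv {f : E → ℝ} (hf : Continuous f) (hcf : HasCompactSupport f)
    {g : E → F} (hg : Continuous g) : Continuous ↿(scaledConv f g) := by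
  have restrict_eq (p : ℝ × E) :
      scaledConv f g p.1 p.2 = ∫ y in tsupport f, f y • g (p.2 - p.1 • y) :=
    (setIntegral_eq_integral_of_forall_compl_eq_zero fun y hy ↦ by
      rw [image_eq_zero_of_notMem_tsupport hy, zero_smul]).symm
  exact (continuous_parametric_integral_of_continuous (by fun_prop) hcf).congr
    fun p ↦ (restrict_eq p).symm

theorem scaledConv_eq_integral_dilate (f : E → ℝ) (g : E → F) {s : ℝ} (hs : 0 < s) (x : E) :
    scaledConv f g s x = ∫ z, dilate f s (x - z) • g z := by
  rw [scaledConv, ← integral_dilate_smul f (fun z ↦ g (x - z)) hs,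
    ← integral_sub_left_eq_self _ volume x]
  simp

theorem scaledConv_eq_convolution (f : E → ℝ) (g : E → F) {s : ℝ} (hs : 0 < s) :
    scaledConv f g s = g ⋆[(ContinuousLinearMap.lsmul ℝ ℝ).flip, volume] dilate f s :=
  funext fun x ↦ scaledConv_eq_integral_dilate f g hs x

theorem contDiff_scaledConv {n : ℕ∞} {f : E → ℝ} (hf : ContDiff ℝ n f)
    (hcf : HasCompactSupport f) {g : E → F} (hg : LocallyIntegrable g) {s : ℝ} (hs : 0 < s) :
    ContDiff ℝ n (scaledConv f g s) := by
  rw [scaledConv_eq_convolution f g hs]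
  exact (hasCompactSupport_dilate hcf hs.ne').contDiff_convolution_right _ hg (contDiff_dilate hf s)

theorem hasDerivAt_scaledConv {f : E → ℝ} (hf : ContDiff ℝ 1 f) (hcf : HasCompactSupport f)
    {g : E → F} (hg : LocallyIntegrable g) {s : ℝ} (hs : 0 < s) (x : E) :
    HasDerivAt (fun s ↦ scaledConv f g s x) (-s⁻¹ • scaledConv (radialDiv f) g s x) s := by
  rw [scaledConv_eq_convolution _ g hs, ← Pi.smul_apply, ← convolution_smul]
  have deriv_convolution := hasDerivAt_convolution_right_with_param
    (ContinuousLinearMap.lsmul ℝ ℝ).flip (isOpen_Ioo (a := 0) (b := s + 1))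
    ((isCompact_Icc (a := 0) (b := s + 1)).smul_set hcf)
    (fun r z hr hz ↦ dilate_eq_zero_of_notMem_smul_tsupport hr.1.ne' (Ioo_subset_Icc_self hr) hz)
    hg ((contDiffOn_dilate hf).mono (prod_mono_left fun r hr ↦ hr.1.ne'))
    ⟨hs, lt_add_one s⟩ (hasDerivAt_dilate (hf.differentiable one_ne_zero) hs.ne') x
  refine deriv_convolution.congr_of_eventuallyEq ?_
  filter_upwards [Ioi_mem_nhds hs] with r hr
  rw [scaledConv_eq_convolution f g hr]

end ScaledConv

section WeakLaplaceEqOn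

variable [InnerProductSpace ℝ E] [FiniteDimensional ℝ E] [MeasurableSpace E] [BorelSpace E]
  {u v : E → F} {Ω : Set E}

/-- The equation `Δ v = u` holds weakly on `Ω`, tested against smooth functions with compact
support in `Ω`. -/
def WeakLaplaceEqOn (v u : E → F) (Ω : Set E) : Prop :=
  ∀ h : E → ℝ, ContDiff ℝ ∞ h → HasCompactSupport h → tsupport h ⊆ Ω →
    ∫ x in Ω, Δ h x • v x = ∫ x in Ω, h x • u x

theorem weakLaplaceEqOn_iff_integral_eq :
    WeakLaplaceEqOn v u Ω ↔ ∀ h : E → ℝ, ContDiff ℝ ∞ h → HasCompactSupport h → tsupport h ⊆ Ω →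
      ∫ x, Δ h x • v x = ∫ x, h x • u x := by
  refine forall_congr' fun h ↦ forall₃_congr fun _ _ hhΩ ↦ ?_
  have lhs : ∫ x in Ω, Δ h x • v x = ∫ x, Δ h x • v x :=
    setIntegral_eq_integral_of_forall_compl_eq_zero fun x hx ↦ by
      rw [laplacian_eq_zero_of_notMem_tsupport fun hxh ↦ hx (hhΩ hxh), zero_smul]
  have rhs : ∫ x in Ω, h x • u x = ∫ x, h x • u x :=
    setIntegral_eq_integral_of_forall_compl_eq_zero fun x hx ↦ by
      rw [image_eq_zero_of_notMem_tsupport fun hxh ↦ hx (hhΩ hxh), zero_smul]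
  rw [lhs, rhs]

namespace WeakLaplaceEqOn

theorem mono (hvu : WeakLaplaceEqOn v u Ω) {Ω' : Set E} (hΩ' : Ω' ⊆ Ω) :
    WeakLaplaceEqOn v u Ω' :=
  weakLaplaceEqOn_iff_integral_eq.2 fun h hh hch hhΩ' ↦
    weakLaplaceEqOn_iff_integral_eq.1 hvu h hh hch (hhΩ'.trans hΩ')

theorem congr (hvu : WeakLaplaceEqOn v u Ω) (hΩ : MeasurableSet Ω) {v' u' : E → F}
    (hv : EqOn v' v Ω) (hu : EqOn u' u Ω) : WeakLaplaceEqOn v' u' Ω := fun h hh hch hhΩ ↦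
  calc
    ∫ x in Ω, Δ h x • v' x = ∫ x in Ω, Δ h x • v x :=
      setIntegral_congr_fun hΩ fun x hx ↦ by simp only [hv hx]
    _ = ∫ x in Ω, h x • u x := hvu h hh hch hhΩ
    _ = ∫ x in Ω, h x • u' x := setIntegral_congr_fun hΩ fun x hx ↦ by simp only [hu hx]

theorem scaledConv_laplacian (hvu : WeakLaplaceEqOn v u Ω) {f : E → ℝ} (hf : ContDiff ℝ ∞ f)
    (hf1 : support f ⊆ closedBall 0 1) {s : ℝ} (hs : 0 < s) {x : E} (hx : closedBall x s ⊆ Ω) :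
    scaledConv (Δ f) v s x = s ^ 2 • scaledConv f u s x := by
  let h : E → ℝ := fun z ↦ dilate f s (x - z)
  have smooth : ContDiff ℝ ∞ h :=
    (contDiff_dilate hf s).comp (contDiff_const.sub contDiff_id)
  have supp : support h ⊆ closedBall x s := by
    intro z hz
    have : s⁻¹ • (x - z) ∈ closedBall 0 1 := hf1 (right_ne_zero_of_mul hz)
    rwa [mem_closedBall_zero_iff, norm_smul, norm_inv, Real.norm_of_nonneg hs.le,
      inv_mul_le_iff₀ hs, mul_one, ← dist_eq_norm, dist_comm] at this
  have lap : Δ h = fun z ↦ s⁻¹ ^ 2 * dilate (Δ f) s (x - z) := by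
    have hf2 : ContDiff ℝ 2 f := contDiff_infty.1 hf 2
    rw [laplacian_comp_const_sub (contDiff_dilate hf2 s), laplacian_dilate hf2]
    rfl
  have weak := weakLaplaceEqOn_iff_integral_eq.1 hvu h smooth
    (.of_support_subset_isCompact (isCompact_closedBall x s) supp)
    ((closure_minimal supp isClosed_closedBall).trans hx)
  simp_rw [lap, mul_smul, integral_smul, h, ← scaledConv_eq_integral_dilate _ _ hs] at weak
  rw [← weak, smul_smul, ← mul_pow, mul_inv_cancel₀ hs.ne', one_pow, one_smul]

end WeakLaplaceEqOn

end WeakLaplaceEqOn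

section Parametrix

variable [InnerProductSpace ℝ E] [FiniteDimensional ℝ E] [MeasurableSpace E] [BorelSpace E]

/-- A local parametrix of the Laplacian: up to a constant factor and a smoothing error, convolution
with it inverts `-Δ`. It is the measure with density `∫ s in 0..δ, s * dilate radialBump s z`; as
this density is singular at the origin, the measure is defined as the image under `(s, y) ↦ s • y`
of a measure on `(0, δ] × E`. -/
noncomputable def parametrix (δ : ℝ) : Measure E :=
  (((volume.restrict (Ioc 0 δ)).prod volume).withDensity
    fun a : ℝ × E ↦ ENNReal.ofReal (a.1 * radialBump a.2)).map fun a ↦ a.1 • a.2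

instance isFiniteMeasure_parametrix (δ : ℝ) : IsFiniteMeasure (parametrix δ : Measure E) := by
  have integrable : Integrable (fun a : ℝ × E ↦ a.1 * radialBump a.2)
      ((volume.restrict (Ioc 0 δ)).prod volume) :=
    Integrable.mul_prod (f := fun s ↦ s)
      (continuous_id.integrableOn_Icc.mono_set Ioc_subset_Icc_self)
      (contDiff_radialBump.continuous.integrable_of_hasCompactSupport hasCompactSupport_radialBump)
  have := isFiniteMeasure_withDensity_ofReal integrable.hasFiniteIntegral
  exact Measure.isFiniteMeasure_map _ _

theorem integral_parametrix {δ : ℝ} (hδ : 0 ≤ δ) {g : E → F} (hg : Integrable g (parametrix δ)) :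
    ∫ z, g z ∂parametrix δ = ∫ s in 0..δ, s • ∫ y, radialBump y • g (s • y) := by
  have density_meas : Measurable fun a : ℝ × E ↦ ENNReal.ofReal (a.1 * radialBump a.2) :=
    (continuous_fst.mul
      (contDiff_radialBump.continuous.comp continuous_snd)).measurable.ennreal_ofReal
  have smul_meas : Measurable fun a : ℝ × E ↦ a.1 • a.2 := continuous_smul.measurable
  have integrable := hg
  rw [parametrix, integrable_map_measure hg.1 smul_meas.aemeasurable,
    integrable_withDensity_iff_integrable_smul' density_meas (by simp)] at integrable
  simp only [comp_def] at integrable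
  rw [parametrix, integral_map smul_meas.aemeasurable hg.1,
    integral_withDensity_eq_integral_toReal_smul density_meas (by simp), integral_prod _ integrable,
    intervalIntegral.integral_of_le hδ]
  refine setIntegral_congr_fun measurableSet_Ioc fun s hs ↦ ?_
  simp only [← integral_smul, smul_smul,
    ENNReal.toReal_ofReal (mul_nonneg hs.1.le (radialBump_nonneg _))]

theorem contDiff_integral_parametrix (δ : ℝ) {n : ℕ∞} {g : E → F} (hg : ContDiff ℝ n g)
    (hcg : HasCompactSupport g) : ContDiff ℝ n fun x ↦ ∫ z, g (x - z) ∂parametrix δ := by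
  have smooth := hcg.contDiff_convolution_right (ContinuousLinearMap.lsmul ℝ ℝ)
    (locallyIntegrable_const (μ := parametrix δ) (1 : ℝ)) hg
  refine (congrArg (ContDiff ℝ n) (funext fun x ↦ ?_)).mp smooth
  simp only [convolution_def, ContinuousLinearMap.lsmul_apply, one_smul]

end Parametrix

section Regularity

variable [InnerProductSpace ℝ E] [FiniteDimensional ℝ E] [MeasurableSpace E] [BorelSpace E]
  [CompleteSpace F] {v u : E → F} {Ω : Set E}

theorem WeakLaplaceEqOn.integral_radialBumpSlope_smul_eq_sub (hvu : WeakLaplaceEqOn v u Ω)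
    (hv : Continuous v) (hu : Continuous u) (hcu : HasCompactSupport u) {δ : ℝ} (hδ : 0 < δ) {x : E}
    (hx : closedBall x δ ⊆ Ω) :
    (∫ y : E, radialBumpSlope y) • v x =
      scaledConv radialBumpSlope v δ x - ∫ z, u (x - z) ∂parametrix δ := by
  have slope_cont : Continuous fun s ↦ scaledConv radialBumpSlope v s x :=
    (continuous_scaledConv contDiff_radialBumpSlope.continuous hasCompactSupport_radialBumpSlope
      hv).comp (.prodMk_left x)
  have bump_cont : Continuous fun s ↦ scaledConv radialBump u s x :=
    (continuous_scaledConv contDiff_radialBump.continuous hasCompactSupport_radialBump hu).comp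
      (.prodMk_left x)
  have deriv_eq (s : ℝ) (hs : s ∈ Ioo 0 δ) : HasDerivAt
      (fun s ↦ scaledConv radialBumpSlope v s x) (s • scaledConv radialBump u s x) s := by
    refine (hasDerivAt_scaledConv (contDiff_radialBumpSlope.of_le (by simp))
      hasCompactSupport_radialBumpSlope hv.locallyIntegrable hs.1 x).congr_deriv ?_
    have weak := hvu.scaledConv_laplacian contDiff_radialBump
      (support_subset_iff'.2 fun _ ↦ radialBump_eq_zero) hs.1
      ((closedBall_subset_closedBall hs.2.le).trans hx)
    rw [laplacian_radialBump, scaledConv_neg, Pi.neg_apply, Pi.neg_apply] at weak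
    rw [neg_smul, ← smul_neg, weak, smul_smul, sq, inv_mul_cancel_left₀ hs.1.ne']
  have ftc := intervalIntegral.integral_eq_sub_of_hasDerivAt_of_le hδ.le slope_cont.continuousOn
    deriv_eq ((continuous_id.smul bump_cont).intervalIntegrable 0 δ)
  have integrable : Integrable (fun z ↦ u (x - z)) (parametrix δ) :=
    (hu.comp (continuous_sub_left x)).integrable_of_hasCompactSupport
      (hcu.comp_homeomorph (Homeomorph.subLeft x))
  rw [integral_parametrix hδ.le integrable, ← scaledConv_zero, eq_sub_iff_add_eq',
    ← eq_sub_iff_add_eq]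
  exact ftc

theorem WeakLaplaceEqOn.contDiffOn_of_contDiff {k : ℕ∞} (hvu : WeakLaplaceEqOn v u Ω)
    (hΩ : IsOpen Ω) (hv : Continuous v) (hu : ContDiff ℝ k u) (hcu : HasCompactSupport u) :
    ContDiffOn ℝ k v Ω := by
  intro x₀ hx₀
  obtain ⟨δ, hδ, hδΩ⟩ := nhds_basis_closedBall.mem_iff.1 (hΩ.mem_nhds hx₀)
  have smooth : ContDiff ℝ k fun x ↦ (∫ y : E, radialBumpSlope y)⁻¹ •
      (scaledConv radialBumpSlope v (δ / 2) x - ∫ z, u (x - z) ∂parametrix (δ / 2)) :=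
    ((contDiff_scaledConv (contDiff_radialBumpSlope.of_le (by exact_mod_cast le_top))
      hasCompactSupport_radialBumpSlope hv.locallyIntegrable (half_pos hδ)).sub
      (contDiff_integral_parametrix _ hu hcu)).const_smul _
  refine (smooth.contDiffAt.congr_of_eventuallyEq ?_).contDiffWithinAt
  filter_upwards [ball_mem_nhds x₀ (half_pos hδ)] with x hx
  have ball_subset : closedBall x (δ / 2) ⊆ Ω :=
    (closedBall_subset_closedBall' (by linarith [mem_ball.1 hx])).trans hδΩ
  rw [eq_inv_smul_iff₀ integral_radialBumpSlope_pos.ne',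
    hvu.integral_radialBumpSlope_smul_eq_sub hv hu.continuous hcu (half_pos hδ) ball_subset]

theorem smooth_of_weak_laplace_eq_smooth_general {k : ℕ∞} (hΩ : IsOpen Ω) (hv : ContinuousOn v Ω)
    (hu : ContDiffOn ℝ k u Ω) (hvu : WeakLaplaceEqOn v u Ω) : ContDiffOn ℝ k v Ω := by
  intro x₀ hx₀
  obtain ⟨r, hr, hrΩ⟩ := nhds_basis_closedBall.mem_iff.1 (hΩ.mem_nhds hx₀)
  let χ : ContDiffBump x₀ := ⟨r / 2, r, half_pos hr, half_lt_self hr⟩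
  have χ_smooth : ContDiff ℝ k χ := χ.contDiff
  have χ_supp : tsupport χ ⊆ Ω := χ.tsupport_eq.trans_subset hrΩ
  have χ_one : EqOn χ 1 (ball x₀ (r / 2)) := fun x hx ↦
    χ.one_of_mem_closedBall (ball_subset_closedBall hx)
  have localised : WeakLaplaceEqOn (fun x ↦ χ x • v x) (fun x ↦ χ x • u x) (ball x₀ (r / 2)) :=
    (hvu.mono ((ball_subset_closedBall.trans
      (closedBall_subset_closedBall (half_le_self hr.le))).trans hrΩ)).congr measurableSet_ball
      (fun x hx ↦ by simp [χ_one hx]) (fun x hx ↦ by simp [χ_one hx])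
  have smooth := localised.contDiffOn_of_contDiff isOpen_ball
    (contDiff_zero.1 (contDiff_smul_of_tsupport_subset χ.contDiff hΩ χ_supp (contDiffOn_zero.2 hv)))
    (contDiff_smul_of_tsupport_subset χ_smooth hΩ χ_supp hu) χ.hasCompactSupport.smul_right
  refine ((smooth.contDiffAt (ball_mem_nhds x₀ (half_pos hr))).congr_of_eventuallyEq
    ?_).contDiffWithinAt
  filter_upwards [ball_mem_nhds x₀ (half_pos hr)] with x hx
  simp [χ_one hx]

end Regularity

/-- Elliptic regularity (Weyl's lemma): if `v` is a `C¹` function on an open set `Ω ⊆ ℝⁿ`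
which satisfies `Δv = u` weakly for a `C¹` function `u`, and `u` is smooth, then `v` is
smooth. -/
theorem smooth_of_weak_laplace_eq_smooth
    {n : ℕ} (Ω : Set (EuclideanSpace ℝ (Fin n))) (hΩ : IsOpen Ω)
    (v u : EuclideanSpace ℝ (Fin n) → ℝ)
    (hv : ContDiffOn ℝ 1 v Ω) (hu : ContDiffOn ℝ 1 u Ω)
    (husm : ContDiffOn ℝ (⊤ : ℕ∞) u Ω)
    (hweak : ∀ h : EuclideanSpace ℝ (Fin n) → ℝ, ContDiff ℝ (⊤ : ℕ∞) h →
      HasCompactSupport h → tsupport h ⊆ Ω →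
      ∫ x in Ω, v x * eLap h x = ∫ x in Ω, u x * h x) :
    ContDiffOn ℝ (⊤ : ℕ∞) v Ω :=
  smooth_of_weak_laplace_eq_smooth_general hΩ hv.continuousOn husm fun h hh hch hhΩ ↦ by
    simpa only [eLap_eq_laplacian, smul_eq_mul, mul_comm] using hweak h hh hch hhΩ
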